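/- Let V : ℝ^d → ℝ be continuous with V ≥ 1 and suppose there is c₁ > 0 with c₁⁻¹ V(x) ≤ V(y) ≤ c₁ V(x) whenever |x−y| ≤ 1. Let η ∈ C_c^∞(ℝ^d) with η ≥ 0, supp η ⊂ {|x| ≤ 1} and ∫ η(x) dx = 1, and set Ṽ = η * V (convolution). Then Ṽ is smooth, c₁⁻¹ V(x) ≤ Ṽ(x) ≤ c₁ V(x) for all x ∈ ℝ^d (in particular Ṽ ≥ 1), and for every multi-index α ∈ ℤ_+^d there is C_α > 0 such that |∂_x^α Ṽ(x)| ≤ C_α Ṽ(x) for all x ∈ ℝ^d. -/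

import Mathlib

open MeasureTheory

/-!
All derivatives of `η ⋆ V` fall on `η`, so `|Dⁿ(η ⋆ V)| ≤ |Dⁿη| ⋆ V`. Convolving `V` with a
nonnegative kernel supported in the ball of radius `r` only sees values of `V` within distance `r`,
which are at most `c * V x`; this bounds `|Dⁿη| ⋆ V` by a multiple of `V`, and `V` in turn by
`c * (η ⋆ V)`.
-/

open ContinuousLinearMap Function Metric
open scoped Convolution

theorem sub_mem_closedBall {G : Type*} [SeminormedAddCommGroup G] {t : G} {r : ℝ}
    (ht : t ∈ closedBall 0 r) (x : G) : x - t ∈ closedBall x r := by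
  simpa only [mem_closedBall, dist_eq_norm, sub_sub_cancel_left, norm_neg, sub_zero] using ht

section Monotonicity

variable {G : Type*} [MeasurableSpace G] {μ : Measure G} {f g g' : G → ℝ} {x : G} {a r : ℝ}

theorem convolution_mul_le_of_le_on_support [Sub G] (hf : ∀ t, 0 ≤ f t)
    (hfg : ConvolutionExistsAt f g x (mul ℝ ℝ) μ) (hfg' : ConvolutionExistsAt f g' x (mul ℝ ℝ) μ)
    (hle : ∀ t ∈ support f, g (x - t) ≤ g' (x - t)) :
    (f ⋆[mul ℝ ℝ, μ] g) x ≤ (f ⋆[mul ℝ ℝ, μ] g') x := by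
  refine integral_mono hfg hfg' fun t => ?_
  by_cases ht : f t = 0
  · simp only [ht, map_zero, zero_apply, le_refl]
  · exact mul_le_mul_of_nonneg_left (hle t ht) (hf t)

theorem convolution_mul_const [Sub G] : (f ⋆[mul ℝ ℝ, μ] fun _ => a) x = (∫ t, f t ∂μ) * a :=
  integral_mul_const a f

theorem convolutionExistsAt_mul_const [Sub G] (hf : Integrable f μ) :
    ConvolutionExistsAt f (fun _ => a) x (mul ℝ ℝ) μ :=
  hf.mul_const a

variable [SeminormedAddCommGroup G]

theorem convolution_mul_le_integral_mul (hf : ∀ t, 0 ≤ f t) (hfi : Integrable f μ)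
    (hfr : support f ⊆ closedBall 0 r) (hfg : ConvolutionExistsAt f g x (mul ℝ ℝ) μ)
    (hg : ∀ y ∈ closedBall x r, g y ≤ a) :
    (f ⋆[mul ℝ ℝ, μ] g) x ≤ (∫ t, f t ∂μ) * a :=
  (convolution_mul_le_of_le_on_support hf hfg (convolutionExistsAt_mul_const hfi) fun _ ht =>
    hg _ (sub_mem_closedBall (hfr ht) x)).trans_eq convolution_mul_const

theorem integral_mul_le_convolution_mul (hf : ∀ t, 0 ≤ f t) (hfi : Integrable f μ)
    (hfr : support f ⊆ closedBall 0 r) (hfg : ConvolutionExistsAt f g x (mul ℝ ℝ) μ)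
    (hg : ∀ y ∈ closedBall x r, a ≤ g y) :
    (∫ t, f t ∂μ) * a ≤ (f ⋆[mul ℝ ℝ, μ] g) x :=
  convolution_mul_const.symm.trans_le <|
    convolution_mul_le_of_le_on_support hf (convolutionExistsAt_mul_const hfi) hfg fun _ ht =>
      hg _ (sub_mem_closedBall (hfr ht) x)

end Monotonicity

theorem norm_convolution_le_of_norm_le {𝕜 G E E' F : Type*} [NontriviallyNormedField 𝕜]
    [NormedAddCommGroup E] [NormedSpace 𝕜 E] [NormedAddCommGroup E'] [NormedSpace 𝕜 E']
    [NormedAddCommGroup F] [NormedSpace 𝕜 F] [NormedSpace ℝ F] [Sub G] [MeasurableSpace G]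
    {μ : Measure G} (L : E →L[𝕜] E' →L[𝕜] F) {f : G → E} {φ : G → ℝ} {g : G → E'} {x : G} {C : ℝ}
    (hf : ∀ t, ‖f t‖ ≤ φ t * C)
    (hφg : ConvolutionExistsAt φ (fun t => ‖g t‖) x (mul ℝ ℝ) μ) :
    ‖(f ⋆[L, μ] g) x‖ ≤ ‖L‖ * (φ ⋆[mul ℝ ℝ, μ] fun t => ‖g t‖) x * C := by
  have hbound : ∀ t, ‖L (f t) (g (x - t))‖ ≤ ‖L‖ * C * (φ t * ‖g (x - t)‖) := fun t =>
    calc ‖L (f t) (g (x - t))‖ ≤ ‖L‖ * ‖f t‖ * ‖g (x - t)‖ := L.le_opNorm₂ _ _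
      _ ≤ ‖L‖ * (φ t * C) * ‖g (x - t)‖ := by gcongr; exact hf t
      _ = ‖L‖ * C * (φ t * ‖g (x - t)‖) := by ring
  calc ‖(f ⋆[L, μ] g) x‖ ≤ ∫ t, ‖L‖ * C * (φ t * ‖g (x - t)‖) ∂μ :=
        norm_integral_le_of_norm_le (hφg.integrable.const_mul _) (.of_forall hbound)
    _ = ‖L‖ * C * (φ ⋆[mul ℝ ℝ, μ] fun t => ‖g t‖) x := integral_const_mul _ _
    _ = ‖L‖ * (φ ⋆[mul ℝ ℝ, μ] fun t => ‖g t‖) x * C := by ring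

section IteratedDerivatives

variable {𝕜 G E E' F : Type*} [RCLike 𝕜]
  [NormedAddCommGroup G] [NormedSpace 𝕜 G] [MeasurableSpace G] [BorelSpace G]
  [NormedAddCommGroup E] [NormedSpace 𝕜 E] [NormedAddCommGroup E'] [NormedSpace 𝕜 E']
  [NormedAddCommGroup F] [NormedSpace 𝕜 F] [NormedSpace ℝ F]
  {μ : Measure G} [SFinite μ] [μ.IsAddLeftInvariant] [μ.IsNegInvariant]
  (L : E →L[𝕜] E' →L[𝕜] F) {f : G → E} {g : G → E'} {n : ℕ}

theorem fderiv_convolution_left_apply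
    (hcf : HasCompactSupport f) (hf : ContDiff 𝕜 1 f) (hg : LocallyIntegrable g μ) (x v : G) :
    fderiv 𝕜 (f ⋆[L, μ] g) x v = ((fun t => fderiv 𝕜 f t v) ⋆[L, μ] g) x := by
  have hexists := (hcf.fderiv 𝕜).convolutionExists_left (L.precompL G)
    (hf.continuous_fderiv one_ne_zero) hg x
  rw [(hcf.hasFDerivAt_convolution_left L hf hg x).fderiv]
  exact integral_apply hexists v

theorem iteratedFDeriv_convolution_left_apply
    (hcf : HasCompactSupport f) (hf : ContDiff 𝕜 n f) (hg : LocallyIntegrable g μ) (x : G)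
    (v : Fin n → G) :
    iteratedFDeriv 𝕜 n (f ⋆[L, μ] g) x v =
      ((fun t => iteratedFDeriv 𝕜 n f t v) ⋆[L, μ] g) x := by
  induction n generalizing x with
  | zero => rfl
  | succ n ih =>
    have hlt : (n : WithTop ℕ∞) < (n + 1 : ℕ) := by exact_mod_cast n.lt_succ_self
    have hDf : ContDiff 𝕜 1 (iteratedFDeriv 𝕜 n f) :=
      hf.iteratedFDeriv_right (by norm_cast; omega)
    have hDfv : ContDiff 𝕜 1 fun t => iteratedFDeriv 𝕜 n f t (Fin.tail v) :=
      (ContinuousMultilinearMap.apply 𝕜 (fun _ : Fin n => G) E (Fin.tail v)).contDiff.comp hDf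
    have hcDfv : HasCompactSupport fun t => iteratedFDeriv 𝕜 n f t (Fin.tail v) :=
      (hcf.iteratedFDeriv n).comp_left (g := fun A : G [×n]→L[𝕜] E => A (Fin.tail v)) rfl
    have hdiff : Differentiable 𝕜 (iteratedFDeriv 𝕜 n (f ⋆[L, μ] g)) :=
      (hcf.contDiff_convolution_left (n := (n + 1 : ℕ)) L hf hg).differentiable_iteratedFDeriv hlt
    calc iteratedFDeriv 𝕜 (n + 1) (f ⋆[L, μ] g) x v
        = fderiv 𝕜 (fun y => iteratedFDeriv 𝕜 n (f ⋆[L, μ] g) y (Fin.tail v)) x (v 0) := by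
          rw [iteratedFDeriv_succ_apply_left,
            fderiv_continuousMultilinear_apply_const_apply (hdiff x)]
      _ = fderiv 𝕜 ((fun t => iteratedFDeriv 𝕜 n f t (Fin.tail v)) ⋆[L, μ] g) x (v 0) := by
          rw [funext fun y => ih (hf.of_le hlt.le) y (Fin.tail v)]
      _ = ((fun t => iteratedFDeriv 𝕜 (n + 1) f t v) ⋆[L, μ] g) x := by
          simp only [fderiv_convolution_left_apply L hcDfv hDfv hg, iteratedFDeriv_succ_apply_left,
            fderiv_continuousMultilinear_apply_const_apply (hDf.differentiable one_ne_zero _)]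

theorem norm_iteratedFDeriv_convolution_left_le
    (hcf : HasCompactSupport f) (hf : ContDiff 𝕜 n f) (hg : LocallyIntegrable g μ) (x : G) :
    ‖iteratedFDeriv 𝕜 n (f ⋆[L, μ] g) x‖ ≤
      ‖L‖ * ((fun t => ‖iteratedFDeriv 𝕜 n f t‖) ⋆[mul ℝ ℝ, μ] fun t => ‖g t‖) x := by
  have hexists := (hcf.iteratedFDeriv n).norm.convolutionExists_left (mul ℝ ℝ)
    (hf.continuous_iteratedFDeriv le_rfl).norm (fun y => (hg y).norm) x
  refine ContinuousMultilinearMap.opNorm_le_bound ?_ fun v => ?_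
  · exact mul_nonneg (norm_nonneg L) <|
      integral_nonneg fun _ => mul_nonneg (norm_nonneg _) (norm_nonneg _)
  · rw [iteratedFDeriv_convolution_left_apply L hcf hf hg]
    exact norm_convolution_le_of_norm_le L (fun t => (iteratedFDeriv 𝕜 n f t).le_opNorm v) hexists

end IteratedDerivatives

theorem norm_iteratedFDeriv_convolution_mul_le {E : Type*} [NormedAddCommGroup E] [NormedSpace ℝ E]
    [MeasurableSpace E] [BorelSpace E] {μ : Measure E} [SFinite μ] [IsFiniteMeasureOnCompacts μ]
    [μ.IsAddLeftInvariant] [μ.IsNegInvariant] {η V : E → ℝ} {x : E} {a r : ℝ} {n : ℕ}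
    (hη : ContDiff ℝ n η) (hcη : HasCompactSupport η) (hηr : tsupport η ⊆ closedBall 0 r)
    (hV : LocallyIntegrable V μ) (hV0 : ∀ y, 0 ≤ V y) (hVa : ∀ y ∈ closedBall x r, V y ≤ a) :
    ‖iteratedFDeriv ℝ n (η ⋆[mul ℝ ℝ, μ] V) x‖ ≤ (∫ t, ‖iteratedFDeriv ℝ n η t‖ ∂μ) * a := by
  have hcD : HasCompactSupport fun t => ‖iteratedFDeriv ℝ n η t‖ := (hcη.iteratedFDeriv n).norm
  have hD : Continuous fun t => ‖iteratedFDeriv ℝ n η t‖ :=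
    (hη.continuous_iteratedFDeriv le_rfl).norm
  have hDr : support (fun t => ‖iteratedFDeriv ℝ n η t‖) ⊆ closedBall 0 r :=
    (support_comp_subset norm_zero _).trans ((support_iteratedFDeriv_subset n).trans hηr)
  calc ‖iteratedFDeriv ℝ n (η ⋆[mul ℝ ℝ, μ] V) x‖
      ≤ ((fun t => ‖iteratedFDeriv ℝ n η t‖) ⋆[mul ℝ ℝ, μ] V) x := by
        simpa only [opNorm_mul, one_mul, Real.norm_of_nonneg (hV0 _)] using
          norm_iteratedFDeriv_convolution_left_le (mul ℝ ℝ) hcη hη hV x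
    _ ≤ (∫ t, ‖iteratedFDeriv ℝ n η t‖ ∂μ) * a :=
        convolution_mul_le_integral_mul (fun _ => norm_nonneg _)
          (hD.integrable_of_hasCompactSupport hcD) hDr (hcD.convolutionExists_left _ hD hV x) hVa

theorem smoothed_potential_properties_general {E : Type*} [NormedAddCommGroup E] [NormedSpace ℝ E]
    [FiniteDimensional ℝ E] [MeasurableSpace E] [BorelSpace E] {μ : Measure E}
    [μ.IsAddHaarMeasure] {V : E → ℝ} (hV : LocallyIntegrable V μ) {m : ℝ} (hm : 0 ≤ m)
    (hVm : ∀ x, m ≤ V x) {c r : ℝ} (hc : 0 < c) (hVcomp : ∀ x y, dist x y ≤ r → V y ≤ c * V x)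
    {k : ℕ∞} {η : E → ℝ} (hη : ContDiff ℝ k η) (hη0 : ∀ x, 0 ≤ η x)
    (hηr : tsupport η ⊆ closedBall 0 r) (hηint : ∫ x, η x ∂μ = 1) :
    ContDiff ℝ k (η ⋆[mul ℝ ℝ, μ] V) ∧
    (∀ x, c⁻¹ * V x ≤ (η ⋆[mul ℝ ℝ, μ] V) x ∧ (η ⋆[mul ℝ ℝ, μ] V) x ≤ c * V x) ∧
    (∀ x, m ≤ (η ⋆[mul ℝ ℝ, μ] V) x) ∧
    (∀ n : ℕ, n ≤ k → ∃ C > (0 : ℝ), ∀ x,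
      ‖iteratedFDeriv ℝ n (η ⋆[mul ℝ ℝ, μ] V) x‖ ≤ C * (η ⋆[mul ℝ ℝ, μ] V) x) := by
  have hcη : HasCompactSupport η :=
    (isCompact_closedBall 0 r).of_isClosed_subset (isClosed_tsupport η) hηr
  have hηi : Integrable η μ := hη.continuous.integrable_of_hasCompactSupport hcη
  have hηr' : support η ⊆ closedBall 0 r := (subset_tsupport η).trans hηr
  have hexists := hcη.convolutionExists_left (mul ℝ ℝ) hη.continuous hV
  have hball : ∀ x, ∀ y ∈ closedBall x r, V y ≤ c * V x := fun x y hy =>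
    hVcomp x y (mem_closedBall'.1 hy)
  have hlower : ∀ x, c⁻¹ * V x ≤ (η ⋆[mul ℝ ℝ, μ] V) x := fun x => by
    simpa only [hηint, one_mul] using integral_mul_le_convolution_mul hη0 hηi hηr' (hexists x)
      fun y hy => (inv_mul_le_iff₀ hc).2 (hVcomp y x hy)
  have hupper : ∀ x, (η ⋆[mul ℝ ℝ, μ] V) x ≤ c * V x := fun x => by
    simpa only [hηint, one_mul] using
      convolution_mul_le_integral_mul hη0 hηi hηr' (hexists x) (hball x)
  have hmin : ∀ x, m ≤ (η ⋆[mul ℝ ℝ, μ] V) x := fun x => by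
    simpa only [hηint, one_mul] using
      integral_mul_le_convolution_mul hη0 hηi hηr' (hexists x) fun y _ => hVm y
  refine ⟨hcη.contDiff_convolution_left _ hη hV, fun x => ⟨hlower x, hupper x⟩, hmin,
    fun n hn => ?_⟩
  set I := ∫ t, ‖iteratedFDeriv ℝ n η t‖ ∂μ
  -- The summand `1` keeps the constant positive when `I = 0`, as happens in dimension zero.
  refine ⟨I * c ^ 2 + 1, by positivity, fun x => ?_⟩
  calc ‖iteratedFDeriv ℝ n (η ⋆[mul ℝ ℝ, μ] V) x‖
      ≤ I * (c * V x) :=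
        norm_iteratedFDeriv_convolution_mul_le (hη.of_le (by exact_mod_cast hn)) hcη hηr hV
          (fun y => hm.trans (hVm y)) (hball x)
    _ ≤ I * (c * (c * (η ⋆[mul ℝ ℝ, μ] V) x)) := by
        gcongr
        exact (inv_mul_le_iff₀ hc).1 (hlower x)
    _ ≤ (I * c ^ 2 + 1) * (η ⋆[mul ℝ ℝ, μ] V) x := by
        linear_combination hm.trans (hmin x)

/-- Let `V : ℝ^d → ℝ` be continuous with `V ≥ 1`, comparable at scale `1`
(`c₁⁻¹ V(x) ≤ V(y) ≤ c₁ V(x)` for `|x−y| ≤ 1`).  Let `η` be a smooth nonnegative bump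
supported in the unit ball with `∫ η = 1`, and let `Ṽ = η * V`.  Then `Ṽ` is smooth,
`c₁⁻¹ V ≤ Ṽ ≤ c₁ V` (in particular `Ṽ ≥ 1`), and every derivative of `Ṽ` of order `n`
is bounded by `C_n Ṽ`. -/
theorem smoothed_potential_properties
    (d : ℕ) (V : EuclideanSpace ℝ (Fin d) → ℝ)
    (hVcont : Continuous V) (hV1 : ∀ x, 1 ≤ V x)
    (c₁ : ℝ) (hc₁ : 0 < c₁)
    (hVcomp : ∀ x y : EuclideanSpace ℝ (Fin d), dist x y ≤ 1 →
      c₁⁻¹ * V x ≤ V y ∧ V y ≤ c₁ * V x)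
    (η : EuclideanSpace ℝ (Fin d) → ℝ)
    (hηsmooth : ContDiff ℝ (⊤ : ℕ∞) η) (hηsupp : HasCompactSupport η)
    (hη0 : ∀ x, 0 ≤ η x) (hηball : tsupport η ⊆ Metric.closedBall 0 1)
    (hηint : ∫ x, η x = 1) :
    ContDiff ℝ (⊤ : ℕ∞) (fun x => ∫ y, η (x - y) * V y) ∧
    (∀ x, c₁⁻¹ * V x ≤ (∫ y, η (x - y) * V y) ∧ (∫ y, η (x - y) * V y) ≤ c₁ * V x) ∧
    (∀ x, (1 : ℝ) ≤ ∫ y, η (x - y) * V y) ∧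
    (∀ n : ℕ, ∃ C > (0 : ℝ), ∀ x,
      ‖iteratedFDeriv ℝ n (fun x' => ∫ y, η (x' - y) * V y) x‖ ≤
        C * ∫ y, η (x - y) * V y) := by
  have hconv : η ⋆[mul ℝ ℝ, volume] V = fun x => ∫ y, η (x - y) * V y :=
    funext fun _ => convolution_mul_swap
  obtain ⟨hsmooth, hcomp, hlower, hderiv⟩ := smoothed_potential_properties_general
    (hVcont.locallyIntegrable (μ := volume)) zero_le_one hV1 hc₁
    (fun x y h => (hVcomp x y h).2) hηsmooth hη0 hηball hηint
  simp only [hconv] at hsmooth hcomp hlower hderiv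
  exact ⟨hsmooth, hcomp, hlower, fun n => hderiv n (by exact_mod_cast le_top)⟩
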